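/- Let A be an associative algebra over a field k of characteristic 0, δ the Hochschild differential on C^•(A) = ⊕_n Hom_k(A^{⊗n}, A), and [-,-] the Gerstenhaber bracket. Then δ is compatible with the bracket: for f ∈ C^•(A) and g homogeneous in Hom_k(A^{⊗m}, A), δ[f,g] = (-1)^{m-1}[δ(f), g] + [f, δ(g)]. -/

import Mathlib

open scoped BigOperators

/-- A Hochschild `m`-cochain `f ∈ Hom_k(A^{⊗m}, A)` encoded as a function on sequences. -/
def toC (k : Type*) {A : Type*} [CommSemiring k] [AddCommMonoid A] [Module k A]
    (m : ℕ) (f : MultilinearMap k (fun _ : Fin m => A) A) : (ℕ → A) → A :=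
  fun v => f (fun j => v (j : ℕ))

/-- The circle product `f ∘ g = ∑ᵢ (-1)^{(i-1)(n+1)} f ∘ᵢ g` in the sequence encoding. -/
noncomputable def circC (k : Type*) {A : Type*} [Field k] [AddCommGroup A] [Module k A]
    (m n : ℕ) (F G : (ℕ → A) → A) : (ℕ → A) → A :=
  fun v => ∑ i : Fin m, ((-1 : k) ^ ((i : ℕ) * (n + 1))) •
    F (fun j => if j < (i : ℕ) then v j
      else if j = (i : ℕ) then G (fun t => v ((i : ℕ) + t))
      else v (j + n - 1))

/-- The Gerstenhaber bracket `[f,g] = f ∘ g - (-1)^{(m-1)(n-1)} g ∘ f`. -/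
noncomputable def gerstC (k : Type*) {A : Type*} [Field k] [AddCommGroup A] [Module k A]
    (m n : ℕ) (F G : (ℕ → A) → A) : (ℕ → A) → A :=
  circC k m n F G - ((-1 : k) ^ (((m : ℤ) - 1) * ((n : ℤ) - 1))) • circC k n m G F

/-- The Hochschild differential of an `n`-cochain, in the sequence encoding. -/
noncomputable def hdelC (k : Type*) {A : Type*} [Field k] [Ring A] [Algebra k A]
    (n : ℕ) (F : (ℕ → A) → A) : (ℕ → A) → A :=
  fun v => v 0 * F (fun j => v (j + 1))
    + ∑ i : Fin n, ((-1 : k) ^ ((i : ℕ) + 1)) •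
        F (fun j => if j < (i : ℕ) then v j
          else if j = (i : ℕ) then v (i : ℕ) * v ((i : ℕ) + 1)
          else v (j + 1))
    + ((-1 : k) ^ (n + 1)) • (F v * v n)

/-!
The Gerstenhaber bracket is a graded Lie bracket and `δ f = -[f, μ]` for the multiplication `μ` of
`A`, so the claim is the graded Jacobi identity for `f`, `g`, `μ`. The Jacobi identity holds because
`∘` is a graded right pre-Lie product: sorting the terms of `(f ∘ g) ∘ h` by whether `h` lands to
the left of `g`, inside `g` or to the right of `g` gives
`(f ∘ g) ∘ h - f ∘ (g ∘ h) = f{g, h} + (-1)^{(b-1)(c-1)} f{h, g}` for `g`, `h` of arities `b`, `c`,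
which is graded symmetric in `g` and `h`.
-/

section Sign

variable {R : Type*}

theorem neg_one_pow_add_two_mul [Monoid R] [HasDistribNeg R] (m n : ℕ) :
    (-1 : R) ^ (m + 2 * n) = (-1) ^ m := by
  rw [pow_add, (even_two_mul n).neg_one_pow, mul_one]

theorem neg_one_pow_mul_self_eq_one [Monoid R] [HasDistribNeg R] (n : ℕ) :
    (-1 : R) ^ n * (-1) ^ n = 1 := by
  rw [← pow_add, (Even.add_self n).neg_one_pow]

theorem neg_one_zpow_natCast_sub_one [DivisionRing R] (m : ℕ) :
    (-1 : R) ^ ((m : ℤ) - 1) = (-1) ^ (m + 1) := by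
  rw [zpow_sub_one₀ (neg_ne_zero.2 one_ne_zero), zpow_natCast, pow_succ, inv_neg_one]

theorem neg_one_zpow_sub_one_mul_sub_one [DivisionRing R] (m n : ℕ) :
    (-1 : R) ^ (((m : ℤ) - 1) * ((n : ℤ) - 1)) = (-1) ^ ((m + 1) * (n + 1)) := by
  rw [zpow_mul, neg_one_zpow_natCast_sub_one, pow_mul]
  rcases neg_one_pow_eq_or R (m + 1) with hm | hm <;> rw [hm]
  · simp
  · exact neg_one_zpow_natCast_sub_one n

/-- `a + b - 1` is the arity of `f ∘ g`: degrees (arity minus one) add up. -/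
theorem neg_one_pow_degree_add_mul [Monoid R] [HasDistribNeg R] {a b : ℕ} (hab : 0 < a + b)
    (c : ℕ) :
    (-1 : R) ^ ((a + b - 1 + 1) * (c + 1))
      = (-1) ^ ((a + 1) * (c + 1)) * (-1) ^ ((b + 1) * (c + 1)) := by
  rw [Nat.sub_add_cancel hab, ← pow_add,
    show (a + 1) * (c + 1) + (b + 1) * (c + 1) = (a + b) * (c + 1) + 2 * (c + 1) by ring,
    neg_one_pow_add_two_mul]

end Sign

section Insertion

variable {k A : Type*}

/-- The insertion `f ∘ᵢ g` of an `n`-cochain `g` in the slot `i` of `f`, in the sequence encoding.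
Slots are numbered from `0`. -/
def insC (n i : ℕ) (F G : (ℕ → A) → A) : (ℕ → A) → A :=
  fun v => F (fun l => if l < i then v l
    else if l = i then G (fun t => v (i + t))
    else v (l + n - 1))

theorem insC_insC_sequential {b c i j : ℕ} (hj : j < b) (F G H : (ℕ → A) → A) :
    insC c (i + j) (insC b i F G) H = insC (b + c - 1) i F (insC c j G H) := by
  funext v
  simp only [insC]
  congr 1
  funext l
  rcases lt_trichotomy l i with hl | rfl | hl
  · simp [hl, show l < i + j by lia]
  · simp only [lt_irrefl, if_false, if_true]
    refine congrArg G (funext fun t => ?_)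
    simp only [add_lt_add_iff_left, add_right_inj, add_assoc]
    split_ifs
    · rfl
    · rfl
    · exact congrArg v (by lia)
  · rw [if_neg (by lia), if_neg (by lia), if_neg (by lia), if_neg (by lia), if_neg (by lia),
      if_neg (by lia)]
    exact congrArg v (by lia)

theorem insC_insC_parallel {b c i j : ℕ} (hij : i < j) (F H : (ℕ → A) → A) {G : (ℕ → A) → A}
    (hG : DependsOn G (Set.Iio b)) :
    insC c (j + b - 1) (insC b i F G) H = insC b i (insC c j F H) G := by
  funext v
  simp only [insC]
  congr 1
  funext l
  rcases lt_trichotomy l i with hl | rfl | hl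
  · simp [hl, show l < j by lia, show l < j + b - 1 by lia]
  · simp only [lt_irrefl, if_false, if_true, hij]
    refine hG fun t ht => if_pos ?_
    have := Set.mem_Iio.1 ht
    lia
  · rw [if_neg (by lia), if_neg (by lia)]
    rcases lt_trichotomy l j with hlj | rfl | hlj
    · rw [if_pos (by lia), if_pos hlj, if_neg (by lia), if_neg (by lia)]
    · rw [if_neg (by lia), if_pos (by lia), if_neg (by lia), if_pos rfl]
      refine congrArg H (funext fun t => ?_)
      rw [if_neg (by lia), if_neg (by lia)]
      exact congrArg v (by lia)
    · rw [if_neg (by lia), if_neg (by lia), if_neg (by lia), if_neg (by lia), if_neg (by lia),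
        if_neg (by lia)]
      exact congrArg v (by lia)

variable [CommSemiring k] [AddCommMonoid A] [Module k A]

theorem dependsOn_toC {m : ℕ} (f : MultilinearMap k (fun _ : Fin m => A) A) :
    DependsOn (toC k m f) (Set.Iio m) :=
  fun _ _ h => congrArg f (funext fun j => h j j.isLt)

theorem insC_toC_apply {m : ℕ} (n : ℕ) (i : Fin m)
    (f : MultilinearMap k (fun _ : Fin m => A) A) (G : (ℕ → A) → A) (v : ℕ → A) :
    insC n i (toC k m f) G v
      = f.toLinearMap (fun l => if (l : ℕ) < i then v l else v (l + n - 1)) i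
          (G fun t => v (i + t)) := by
  rw [MultilinearMap.toLinearMap_apply]
  refine congrArg f (funext fun l => ?_)
  rcases eq_or_ne l i with rfl | hl
  · simp
  · simp [hl, Fin.val_ne_iff.2 hl]

theorem isLinearMap_insC_toC {m i : ℕ} (n : ℕ) (hi : i < m)
    (f : MultilinearMap k (fun _ : Fin m => A) A) :
    IsLinearMap k (insC n i (toC k m f)) where
  map_add G G' := funext fun v => by
    simp only [insC_toC_apply n ⟨i, hi⟩ f, Pi.add_apply, map_add]
  map_smul c G := funext fun v => by
    simp only [insC_toC_apply n ⟨i, hi⟩ f, Pi.smul_apply, map_smul]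

end Insertion

section Brace

open Finset

/-- The brace `f{g, h}`: the signed sum of all simultaneous insertions of `g` and `h` in `f` with
`g` to the left of `h`. The index `j` is the position of `h` once `g` has been inserted, that is,
the slot `j - b + 1` of `f`. -/
noncomputable def braceC (k : Type*) {A : Type*} [Ring k] [AddCommMonoid A] [Module k A]
    (a b c : ℕ) (F G H : (ℕ → A) → A) : (ℕ → A) → A :=
  ∑ i ∈ range a, ∑ j ∈ Ico (i + b) (a + b - 1),
    ((-1 : k) ^ (i * (b + 1) + j * (c + 1))) • insC c j (insC b i F G) H

theorem sum_insC_insC_left_eq_braceC {k A : Type*} [Ring k] [AddCommMonoid A] [Module k A]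
    (a b c : ℕ) (F G : (ℕ → A) → A) {H : (ℕ → A) → A} (hH : DependsOn H (Set.Iio c)) :
    ∑ i ∈ range a, ∑ j ∈ range i,
        ((-1 : k) ^ (i * (b + 1) + j * (c + 1))) • insC c j (insC b i F G) H
      = ((-1 : k) ^ ((b + 1) * (c + 1))) • braceC k a c b F H G := by
  rw [sum_comm' (t' := range a) (s' := fun j => Ico (j + 1) a)
    (by simp only [mem_range, mem_Ico]; lia), braceC, smul_sum]
  refine sum_congr rfl fun j _ => ?_
  rw [sum_Ico_eq_sum_range, sum_Ico_eq_sum_range, smul_sum,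
    show a + c - 1 - (j + c) = a - (j + 1) by lia]
  refine sum_congr rfl fun l _ => ?_
  have sign : (-1 : k) ^ ((b + 1) * (c + 1) + (j * (c + 1) + (j + c + l) * (b + 1)))
      = (-1) ^ ((j + 1 + l) * (b + 1) + j * (c + 1)) := by
    rw [show (b + 1) * (c + 1) + (j * (c + 1) + (j + c + l) * (b + 1))
        = (j + 1 + l) * (b + 1) + j * (c + 1) + 2 * (c * (b + 1)) by ring,
      neg_one_pow_add_two_mul]
  rw [← insC_insC_parallel (show j < j + 1 + l by lia) F G hH,
    show j + 1 + l + c - 1 = j + c + l by lia, smul_smul, ← pow_add, sign]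

end Brace

section CircleProduct

open Finset

variable {k A : Type*} [Field k] [AddCommGroup A] [Module k A]

theorem circC_eq_sum_insC (m n : ℕ) (F G : (ℕ → A) → A) :
    circC k m n F G = ∑ i ∈ range m, ((-1 : k) ^ (i * (n + 1))) • insC n i F G := by
  funext v
  rw [Finset.sum_apply]
  exact Fin.sum_univ_eq_sum_range (fun i => ((-1 : k) ^ (i * (n + 1))) • insC n i F G v) m

theorem circC_sub_left (m n : ℕ) (F F' G : (ℕ → A) → A) :
    circC k m n (F - F') G = circC k m n F G - circC k m n F' G := by
  funext v
  simp [circC, smul_sub]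

theorem circC_smul_left (m n : ℕ) (c : k) (F G : (ℕ → A) → A) :
    circC k m n (c • F) G = c • circC k m n F G := by
  funext v
  simp [circC, smul_sum, smul_comm c]

theorem circC_neg_left (m n : ℕ) (F G : (ℕ → A) → A) :
    circC k m n (-F) G = -circC k m n F G := by
  simpa using circC_smul_left m n (-1 : k) F G

theorem isLinearMap_circC_toC {m : ℕ} (n : ℕ) (f : MultilinearMap k (fun _ : Fin m => A) A) :
    IsLinearMap k (circC k m n (toC k m f)) where
  map_add G G' := by
    simp only [circC_eq_sum_insC, ← sum_add_distrib, ← smul_add]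
    exact sum_congr rfl fun i hi => by
      rw [(isLinearMap_insC_toC n (mem_range.1 hi) f).map_add]
  map_smul c G := by
    simp only [circC_eq_sum_insC, smul_sum]
    exact sum_congr rfl fun i hi => by
      rw [(isLinearMap_insC_toC n (mem_range.1 hi) f).map_smul, smul_comm]

theorem circC_sub_right {m : ℕ} (n : ℕ) (f : MultilinearMap k (fun _ : Fin m => A) A)
    (G G' : (ℕ → A) → A) :
    circC k m n (toC k m f) (G - G') = circC k m n (toC k m f) G - circC k m n (toC k m f) G' :=
  (isLinearMap_circC_toC n f).map_sub G G'

theorem circC_smul_right {m : ℕ} (n : ℕ) (c : k) (f : MultilinearMap k (fun _ : Fin m => A) A)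
    (G : (ℕ → A) → A) :
    circC k m n (toC k m f) (c • G) = c • circC k m n (toC k m f) G :=
  (isLinearMap_circC_toC n f).map_smul c G

theorem circC_circC_left_eq_sum (a b c l : ℕ) (F G H : (ℕ → A) → A) :
    circC k l c (circC k a b F G) H
      = ∑ i ∈ range a, ∑ j ∈ range l,
          ((-1 : k) ^ (i * (b + 1) + j * (c + 1))) • insC c j (insC b i F G) H := by
  rw [circC_eq_sum_insC, sum_comm]
  refine sum_congr rfl fun j _ => ?_
  funext v
  simp only [insC, circC_eq_sum_insC, Pi.smul_apply, Finset.sum_apply, smul_sum, smul_smul,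
    ← pow_add, add_comm]

theorem circC_circC_right_eq_sum {a b c : ℕ} (hbc : 0 < b + c)
    (f : MultilinearMap k (fun _ : Fin a => A) A) (G H : (ℕ → A) → A) :
    circC k a (b + c - 1) (toC k a f) (circC k b c G H)
      = ∑ i ∈ range a, ∑ j ∈ Ico i (i + b),
          ((-1 : k) ^ (i * (b + 1) + j * (c + 1))) • insC c j (insC b i (toC k a f) G) H := by
  rw [circC_eq_sum_insC]
  refine sum_congr rfl fun i hi => ?_
  have insC_linear := isLinearMap_insC_toC (b + c - 1) (mem_range.1 hi) f
  rw [circC_eq_sum_insC, ← IsLinearMap.mk'_apply insC_linear, map_sum, smul_sum,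
    sum_Ico_eq_sum_range, add_tsub_cancel_left]
  refine sum_congr rfl fun j hj => ?_
  have sign : (-1 : k) ^ (i * (b + 1) + (i + j) * (c + 1))
      = (-1) ^ (i * (b + c - 1 + 1)) * (-1) ^ (j * (c + 1)) := by
    rw [Nat.sub_add_cancel hbc, ← pow_add,
      show i * (b + 1) + (i + j) * (c + 1) = i * (b + c) + j * (c + 1) + 2 * i by ring,
      neg_one_pow_add_two_mul]
  rw [map_smul, IsLinearMap.mk'_apply, insC_insC_sequential (mem_range.1 hj), smul_smul, sign]

theorem circC_associator_eq_braceC {a b c : ℕ} (hbc : 0 < b + c)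
    (f : MultilinearMap k (fun _ : Fin a => A) A) (G : (ℕ → A) → A) {H : (ℕ → A) → A}
    (hH : DependsOn H (Set.Iio c)) :
    circC k (a + b - 1) c (circC k a b (toC k a f) G) H
        - circC k a (b + c - 1) (toC k a f) (circC k b c G H)
      = braceC k a b c (toC k a f) G H
        + ((-1 : k) ^ ((b + 1) * (c + 1))) • braceC k a c b (toC k a f) H G := by
  rw [sub_eq_iff_eq_add', ← sum_insC_insC_left_eq_braceC a b c _ G hH,
    circC_circC_left_eq_sum, circC_circC_right_eq_sum hbc, braceC,
    ← sum_add_distrib, ← sum_add_distrib]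
  refine sum_congr rfl fun i hi => ?_
  have hia := mem_range.1 hi
  rw [range_eq_Ico, range_eq_Ico, ← sum_Ico_consecutive _ (Nat.zero_le i) (by lia),
    ← sum_Ico_consecutive _ (Nat.le_add_right i b) (by lia)]
  abel

/-- The graded right pre-Lie identity. -/
theorem circC_associator_symm {a b c : ℕ} (hbc : 0 < b + c)
    (f : MultilinearMap k (fun _ : Fin a => A) A) {G H : (ℕ → A) → A}
    (hG : DependsOn G (Set.Iio b)) (hH : DependsOn H (Set.Iio c)) :
    circC k (a + b - 1) c (circC k a b (toC k a f) G) H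
        - circC k a (b + c - 1) (toC k a f) (circC k b c G H)
      = ((-1 : k) ^ ((b + 1) * (c + 1))) •
          (circC k (a + c - 1) b (circC k a c (toC k a f) H) G
            - circC k a (b + c - 1) (toC k a f) (circC k c b H G)) := by
  have associator_swap := circC_associator_eq_braceC (add_comm b c ▸ hbc) f H hG
  rw [add_comm c b, mul_comm (c + 1)] at associator_swap
  rw [circC_associator_eq_braceC hbc f G hH, associator_swap, smul_add, smul_smul,
    neg_one_pow_mul_self_eq_one, one_smul, add_comm]

end CircleProduct

section Bracket

variable {k A : Type*} [Field k] [AddCommGroup A] [Module k A]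

theorem gerstC_eq (m n : ℕ) (F G : (ℕ → A) → A) :
    gerstC k m n F G
      = circC k m n F G - ((-1 : k) ^ ((m + 1) * (n + 1))) • circC k n m G F := by
  rw [gerstC, neg_one_zpow_sub_one_mul_sub_one]

theorem gerstC_neg_left {n : ℕ} (m : ℕ) (F : (ℕ → A) → A)
    (g : MultilinearMap k (fun _ : Fin n => A) A) :
    gerstC k m n (-F) (toC k n g) = -gerstC k m n F (toC k n g) := by
  rw [gerstC, gerstC, circC_neg_left, (isLinearMap_circC_toC m g).map_neg]
  module

theorem gerstC_neg_right {m : ℕ} (n : ℕ) (f : MultilinearMap k (fun _ : Fin m => A) A)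
    (G : (ℕ → A) → A) :
    gerstC k m n (toC k m f) (-G) = -gerstC k m n (toC k m f) G := by
  rw [gerstC, gerstC, circC_neg_left, (isLinearMap_circC_toC n f).map_neg]
  module

/-- The graded Jacobi identity, in the form: `[-, h]` is a graded derivation of the bracket. -/
theorem gerstC_gerstC_left {a b c : ℕ} (hab : 0 < a + b) (hac : 0 < a + c) (hbc : 0 < b + c)
    (f : MultilinearMap k (fun _ : Fin a => A) A) (g : MultilinearMap k (fun _ : Fin b => A) A)
    (h : MultilinearMap k (fun _ : Fin c => A) A) :
    gerstC k (a + b - 1) c (gerstC k a b (toC k a f) (toC k b g)) (toC k c h)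
      = ((-1 : k) ^ (((b : ℤ) - 1) * ((c : ℤ) - 1))) •
          gerstC k (a + c - 1) b (gerstC k a c (toC k a f) (toC k c h)) (toC k b g)
        + gerstC k a (b + c - 1) (toC k a f) (gerstC k b c (toC k b g) (toC k c h)) := by
  have preLie_f := circC_associator_symm hbc f (dependsOn_toC g) (dependsOn_toC h)
  have preLie_g := circC_associator_symm hac g (dependsOn_toC f) (dependsOn_toC h)
  have preLie_h := circC_associator_symm hab h (dependsOn_toC f) (dependsOn_toC g)
  rw [sub_eq_iff_eq_add] at preLie_f preLie_g preLie_h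
  rw [add_comm b a] at preLie_g
  rw [add_comm c a, add_comm c b] at preLie_h
  simp only [neg_one_zpow_sub_one_mul_sub_one, gerstC_eq, circC_sub_left,
    circC_smul_left, circC_sub_right, circC_smul_right, neg_one_pow_degree_add_mul hab,
    neg_one_pow_degree_add_mul hac, mul_comm (a + 1) (b + c - 1 + 1),
    neg_one_pow_degree_add_mul hbc, mul_comm (b + 1) (a + 1), mul_comm (c + 1)]
  rw [preLie_f, preLie_g, preLie_h]
  rcases neg_one_pow_eq_or k ((a + 1) * (b + 1)) with sign_ab | sign_ab <;>
  rcases neg_one_pow_eq_or k ((a + 1) * (c + 1)) with sign_ac | sign_ac <;>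
  rcases neg_one_pow_eq_or k ((b + 1) * (c + 1)) with sign_bc | sign_bc <;>
  rw [sign_ab, sign_ac, sign_bc] <;> module

end Bracket

section Differential

variable {k A : Type*} [Field k] [Ring A] [Algebra k A]

theorem circC_mkPiAlgebraFin_left (n : ℕ) (F : (ℕ → A) → A) (v : ℕ → A) :
    circC k 2 n (toC k 2 (MultilinearMap.mkPiAlgebraFin k 2 A)) F v
      = F v * v n + ((-1 : k) ^ (n + 1)) • (v 0 * F (fun j => v (j + 1))) := by
  simp [circC, toC, Fin.sum_univ_two, add_comm 1]

theorem circC_mkPiAlgebraFin_right (n : ℕ) (F : (ℕ → A) → A) (v : ℕ → A) :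
    circC k n 2 F (toC k 2 (MultilinearMap.mkPiAlgebraFin k 2 A)) v
      = -∑ i : Fin n, ((-1 : k) ^ ((i : ℕ) + 1)) •
        F (fun j => if j < (i : ℕ) then v j
          else if j = (i : ℕ) then v (i : ℕ) * v ((i : ℕ) + 1)
          else v (j + 1)) := by
  rw [circC, ← Finset.sum_neg_distrib]
  refine Finset.sum_congr rfl fun i _ => ?_
  have sign : (-1 : k) ^ ((i : ℕ) * (2 + 1)) = -(-1) ^ ((i : ℕ) + 1) := by
    rw [mul_comm, pow_mul, Odd.neg_one_pow (by decide), pow_succ, mul_neg_one, neg_neg]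
  simp [sign, toC]

theorem hdelC_eq_neg_gerstC (n : ℕ) (F : (ℕ → A) → A) :
    hdelC k n F = -gerstC k n 2 F (toC k 2 (MultilinearMap.mkPiAlgebraFin k 2 A)) := by
  funext v
  have sign : (-1 : k) ^ ((n + 1) * (2 + 1)) = (-1) ^ (n + 1) := by
    rw [mul_comm, pow_mul, Odd.neg_one_pow (by decide)]
  rw [gerstC_eq, sign, Pi.neg_apply, Pi.sub_apply, Pi.smul_apply, circC_mkPiAlgebraFin_left,
    circC_mkPiAlgebraFin_right, hdelC, smul_add, smul_smul, neg_one_pow_mul_self_eq_one, one_smul]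
  abel

/-- The one case that is not an instance of the Jacobi identity, because the arity `0 + 0 - 1` of
`[f, g]` truncates to `0`. -/
theorem hdelC_gerstC_zero_zero (f g : MultilinearMap k (fun _ : Fin 0 => A) A) :
    hdelC k 0 (gerstC k 0 0 (toC k 0 f) (toC k 0 g))
      = ((-1 : k) ^ ((0 : ℤ) - 1)) • gerstC k 1 0 (hdelC k 0 (toC k 0 f)) (toC k 0 g)
        + gerstC k 0 1 (toC k 0 f) (hdelC k 0 (toC k 0 g)) := by
  funext v
  simp [hdelC, gerstC, circC, toC, Subsingleton.elim _ (default : Fin 0 → A)]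

end Differential

theorem stmt_11_general {k A : Type*} [Field k] [Ring A] [Algebra k A] :
    ∀ (n m : ℕ) (f : MultilinearMap k (fun _ : Fin n => A) A)
      (g : MultilinearMap k (fun _ : Fin m => A) A),
      hdelC k (n + m - 1) (gerstC k n m (toC k n f) (toC k m g))
        = ((-1 : k) ^ ((m : ℤ) - 1)) •
            gerstC k (n + 1) m (hdelC k n (toC k n f)) (toC k m g)
          + gerstC k n (m + 1) (toC k n f) (hdelC k m (toC k m g)) := by
  intro n m f g
  rcases Nat.eq_zero_or_pos (n + m) with hnm | hnm
  · obtain ⟨rfl, rfl⟩ := Nat.add_eq_zero_iff.1 hnm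
    exact hdelC_gerstC_zero_zero f g
  · have jacobi := gerstC_gerstC_left hnm (Nat.add_pos_right n two_pos)
      (Nat.add_pos_right m two_pos) f g (MultilinearMap.mkPiAlgebraFin k 2 A)
    have degree_mul : ((m : ℤ) - 1) * ((2 : ℕ) - 1) = m - 1 := by ring
    rw [degree_mul] at jacobi
    rw [hdelC_eq_neg_gerstC, hdelC_eq_neg_gerstC, hdelC_eq_neg_gerstC, gerstC_neg_left,
      gerstC_neg_right, smul_neg, ← neg_add]
    exact congrArg Neg.neg jacobi

/-- Compatibility of the Hochschild differential with the Gerstenhaber bracket: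
for an `n`-cochain `f` and an `m`-cochain `g`,
`δ[f,g] = (-1)^{m-1}[δ(f), g] + [f, δ(g)]`. -/
theorem stmt_11 {k A : Type*} [Field k] [CharZero k] [Ring A] [Algebra k A] :
    ∀ (n m : ℕ) (f : MultilinearMap k (fun _ : Fin n => A) A)
      (g : MultilinearMap k (fun _ : Fin m => A) A),
      hdelC k (n + m - 1) (gerstC k n m (toC k n f) (toC k m g))
        = ((-1 : k) ^ ((m : ℤ) - 1)) •
            gerstC k (n + 1) m (hdelC k n (toC k n f)) (toC k m g)
          + gerstC k n (m + 1) (toC k n f) (hdelC k m (toC k m g)) :=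
  stmt_11_general
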